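/- arXiv:math/0408031 — 3 statements merged into one kernel-verified Lean document; each statement's English description precedes it below -/
import Mathlib

section
/- For every n ≥ 1 and every 1 ≤ k ≤ n, the number of n-cyclations with exactly k cycles satisfies ⟦n,k⟧ = 2^{n−k}·[n,k], where [n,k] is the unsigned Stirling number of the first kind. -/
/-- The fixed involution pairing the two endpoints of each interval:
endpoint `2m` is paired with endpoint `2m+1`. -/
def intervalPerm (n : ℕ) : Equiv.Perm (Fin (2 * n)) :=
  Function.Involutive.toPerm
    (fun x => ⟨if x.1 % 2 = 0 then x.1 + 1 else x.1 - 1, by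
      have := x.2; split <;> omega⟩)
    (fun x => by
      have := x.2
      ext
      simp only
      split_ifs <;> omega)

/-- An `n`-cyclation: a fixed-point-free involution (perfect matching) on the `2*n`
endpoints of the `n` intervals. -/
def Cyclation (n : ℕ) : Type :=
  {μ : Equiv.Perm (Fin (2 * n)) // (∀ x, μ x ≠ x) ∧ μ * μ = 1}

instance (n : ℕ) : Finite (Cyclation n) := Subtype.finite

noncomputable instance (n : ℕ) : Fintype (Cyclation n) := Fintype.ofFinite _

/-- The subgroup generated by the matching and the interval pairing; its orbits on the
endpoints are exactly the connected components (cycles) of the cyclation, viewed as the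
multigraph whose edges are the intervals together with the matched pairs. -/
def cycGroup {n : ℕ} (c : Cyclation n) : Subgroup (Equiv.Perm (Fin (2 * n))) :=
  Subgroup.closure {c.1, intervalPerm n}

/-- Number of cycles of a cyclation: the number of connected components, i.e. the number
of orbits of `cycGroup c` on the endpoints. -/
noncomputable def cycNumCycles {n : ℕ} (c : Cyclation n) : ℕ :=
  Nat.card (MulAction.orbitRel.Quotient (cycGroup c) (Fin (2 * n)))

/-- Number of cycles of length `l` of a cyclation (a cycle containing `l` intervals is a
connected component with `2*l` endpoints). -/
noncomputable def cycNumCyclesOfLength {n : ℕ} (c : Cyclation n) (l : ℕ) : ℕ :=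
  Nat.card {q : MulAction.orbitRel.Quotient (cycGroup c) (Fin (2 * n)) // q.orbit.ncard = 2 * l}

/-- Length (number of intervals) of the longest cycle of a cyclation. -/
noncomputable def longestCycle {n : ℕ} (c : Cyclation n) : ℕ :=
  (Finset.univ.sup fun x : Fin (2 * n) => (MulAction.orbit (cycGroup c) x).ncard) / 2

/-- Length (number of intervals) of the shortest cycle of a cyclation. -/
noncomputable def shortestCycle {n : ℕ} (c : Cyclation n) : ℕ :=
  sInf (Set.range fun x : Fin (2 * n) => (MulAction.orbit (cycGroup c) x).ncard / 2)

/-- `⟦n,k⟧`: the number of `n`-cyclations with exactly `k` cycles. -/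
noncomputable def cyclationCount (n k : ℕ) : ℕ :=
  Nat.card {c : Cyclation n // cycNumCycles c = k}

/-- Number of cycles (orbits, including fixed points) of a permutation. -/
noncomputable def permCycleCount {m : ℕ} (σ : Equiv.Perm (Fin m)) : ℕ :=
  Nat.card (MulAction.orbitRel.Quotient (Subgroup.zpowers σ) (Fin m))

/-- `[n,k]`: the unsigned Stirling number of the first kind, i.e. the number of
permutations of an `n`-element set with exactly `k` cycles. -/
noncomputable def stirlingFirst (n k : ℕ) : ℕ :=
  Nat.card {σ : Equiv.Perm (Fin n) // permCycleCount σ = k}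

/-!
Count cyclations with `k` cycles together with a direction along each cycle. There are
`2 ^ k * ⟦n,k⟧` of them, as each cycle has exactly two directions. On the other hand, a direction on
each cycle directs each of the `n` intervals; once these `2 ^ n` independent choices are fixed,
joining the intervals head to tail is the same as choosing the predecessor of each interval, that is
a permutation of the intervals, and cycles correspond to cycles. Hence the count is also
`2 ^ n * [n,k]`.
-/

open Equiv MulAction

section Counting

theorem natCard_mul_eq_natCard_mul {α β : Type*} [Finite α] [Finite β]
    (r : α → β → Prop) {m n : ℕ} (hm : ∀ a, Nat.card {b // r a b} = m)
    (hn : ∀ b, Nat.card {a // r a b} = n) : Nat.card α * m = Nat.card β * n := by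
  classical
  have := Fintype.ofFinite α
  have := Fintype.ofFinite β
  simp only [Nat.card_eq_fintype_card, Fintype.card_subtype] at hm hn ⊢
  exact Finset.card_mul_eq_card_mul r (fun a _ ↦ hm a) fun b _ ↦ hn b

variable {G X : Type*} [Group G] [MulAction G X]

theorem orbitRel_closure_le_iff {S : Set G} {r : Setoid X} :
    orbitRel (Subgroup.closure S) X ≤ r ↔ ∀ s ∈ S, ∀ x, r (s • x) x := by
  constructor
  · exact fun h s hs x ↦ h ⟨⟨s, Subgroup.subset_closure hs⟩, rfl⟩
  · rintro h _ x ⟨⟨g, hg⟩, rfl⟩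
    suffices ∀ x, r (g • x) x from this x
    induction hg using Subgroup.closure_induction with
    | mem s hs => exact h s hs
    | one => exact fun x ↦ (one_smul G x).symm ▸ r.refl x
    | mul s t _ _ ihs iht => exact fun x ↦ mul_smul s t x ▸ r.trans (ihs (t • x)) (iht x)
    | inv s _ ih => exact fun x ↦ r.symm (by simpa using ih (s⁻¹ • x))

theorem card_invariant_sets [Finite X] (S : Set G) :
    Nat.card {Q : Set X // ∀ s ∈ S, ∀ x, s • x ∈ Q ↔ x ∈ Q} =
      2 ^ Nat.card (orbitRel.Quotient (Subgroup.closure S) X) := by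
  have invariant_iff (Q : Set X) : (∀ s ∈ S, ∀ x, s • x ∈ Q ↔ x ∈ Q) ↔
      orbitRel (Subgroup.closure S) X ≤ Setoid.ker (· ∈ Q) := by
    simp only [orbitRel_closure_le_iff, Setoid.ker_def, eq_iff_iff]
  calc
    Nat.card {Q : Set X // ∀ s ∈ S, ∀ x, s • x ∈ Q ↔ x ∈ Q}
    _ = Nat.card (orbitRel.Quotient (Subgroup.closure S) X → Prop) :=
      Nat.card_congr (((Equiv.refl (Set X)).subtypeEquiv invariant_iff).trans (Setoid.liftEquiv _))
    _ = 2 ^ Nat.card (orbitRel.Quotient (Subgroup.closure S) X) := by simp [Nat.card_fun]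

end Counting

section Orbits

variable {X Y : Type*}

/-- The number of orbits of a permutation group `H` on `X`; for `H = zpowers σ` this is the number
of cycles of `σ`, fixed points included. -/
noncomputable def orbitCount (H : Subgroup (Perm X)) : ℕ :=
  Nat.card (orbitRel.Quotient H X)

theorem orbitRel_zpowers_iff_sameCycle {σ : Perm X} {x y : X} :
    orbitRel (Subgroup.zpowers σ) X x y ↔ σ.SameCycle y x := by
  simp [orbitRel_apply, mem_orbit_iff, Subgroup.exists_zpowers, Perm.SameCycle, Subgroup.smul_def]

theorem orbitRel_zpowers_permCongr_iff (e : X ≃ Y) {σ : Perm X} {x y : X} :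
    orbitRel (Subgroup.zpowers (e.permCongr σ)) Y (e x) (e y) ↔
      orbitRel (Subgroup.zpowers σ) X x y := by
  have permCongr_zpow (i : ℤ) : e.permCongr σ ^ i = e.permCongr (σ ^ i) :=
    (map_zpow e.permCongrHom σ i).symm
  simp [orbitRel_zpowers_iff_sameCycle, Perm.SameCycle, permCongr_zpow]

theorem orbitCount_zpowers_permCongr (e : X ≃ Y) (σ : Perm X) :
    orbitCount (Subgroup.zpowers (e.permCongr σ)) = orbitCount (Subgroup.zpowers σ) :=
  (Nat.card_congr (Quotient.congr e fun _ _ ↦ (orbitRel_zpowers_permCongr_iff e).symm)).symm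

theorem orbitCount_zpowers_one : orbitCount (Subgroup.zpowers (1 : Perm X)) = Nat.card X := by
  refine (Nat.card_eq_of_bijective Quotient.mk'' ⟨fun x y h ↦ ?_, Quotient.mk''_surjective⟩).symm
  exact (Perm.sameCycle_one.1 (orbitRel_zpowers_iff_sameCycle.1 (Quotient.exact h))).symm

theorem card_perm_orbitCount_eq_stirlingFirst [Finite X] {n : ℕ} (hX : Nat.card X = n) (k : ℕ) :
    Nat.card {σ : Perm X // orbitCount (Subgroup.zpowers σ) = k} = stirlingFirst n k := by
  let e : X ≃ Fin n := Finite.equivFinOfCardEq hX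
  exact Nat.card_congr <| e.permCongr.subtypeEquiv fun σ ↦
    (orbitCount_zpowers_permCongr e σ).symm ▸ Iff.rfl

end Orbits

section Alternating

variable {X : Type*} {μ τ : Perm X} {P : Set X}

/-- A perfect matching on `X`, encoded as a fixed-point-free involution and phrased as in the
definition of `Cyclation`. -/
def IsPerfectMatching (μ : Perm X) : Prop :=
  (∀ x, μ x ≠ x) ∧ μ * μ = 1

/-- `P` is alternating for `μ` if `μ` exchanges `P` with its complement. A set alternating both for
the matching of a cyclation and for its interval pairing encodes a choice of direction along each
cycle: it consists of the initial points of the directed intervals. -/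
def IsAlternating (μ : Perm X) (P : Set X) : Prop :=
  ∀ x, μ x ∈ P ↔ x ∉ P

namespace IsPerfectMatching

theorem apply_apply (hμ : IsPerfectMatching μ) (x : X) : μ (μ x) = x :=
  DFunLike.congr_fun hμ.2 x

theorem inv_eq (hμ : IsPerfectMatching μ) : μ⁻¹ = μ :=
  inv_eq_of_mul_eq_one_left hμ.2

theorem conj (hμ : IsPerfectMatching μ) (g : Perm X) : IsPerfectMatching (g⁻¹ * μ * g) := by
  refine ⟨fun x hx ↦ hμ.1 (g x) ?_, ?_⟩
  · rwa [Perm.mul_apply, Perm.mul_apply, Perm.inv_eq_iff_eq] at hx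
  · ext x
    simp [hμ.apply_apply]

theorem apply_mul_zpow_apply (hμ : IsPerfectMatching μ) (hτ : IsPerfectMatching τ) (j : ℤ) (x : X) :
    τ (((τ * μ) ^ j) x) = ((τ * μ) ^ (-j)) (τ x) := by
  have hconj : SemiconjBy τ (τ * μ) (τ * μ)⁻¹ := by
    rw [SemiconjBy, mul_inv_rev, hμ.inv_eq, hτ.inv_eq, mul_assoc μ, hτ.2, ← mul_assoc, hτ.2,
      one_mul, mul_one]
  simpa only [Perm.mul_apply, inv_zpow'] using DFunLike.congr_fun (hconj.zpow_right j) x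

/-- If `(τ * μ) ^ j` took `x` to `τ x`, the point halfway along would be fixed by `τ` (`j` even)
or by `μ` (`j` odd). -/
theorem mul_zpow_apply_ne (hμ : IsPerfectMatching μ) (hτ : IsPerfectMatching τ) (j : ℤ) (x : X) :
    ((τ * μ) ^ j) x ≠ τ x := by
  intro h
  obtain ⟨m, rfl | rfl⟩ := j.even_or_odd'
  · apply hτ.1 (((τ * μ) ^ m) x)
    rw [hμ.apply_mul_zpow_apply hτ, ← h, ← Perm.mul_apply, ← zpow_add]
    congr 2
    ring
  · have hfix : τ (μ (((τ * μ) ^ m) x)) = τ (((τ * μ) ^ m) x) := by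
      rw [hμ.apply_mul_zpow_apply hτ, ← h, ← Perm.mul_apply, ← Perm.mul_apply, ← Perm.mul_apply,
        ← zpow_add, ← zpow_one_add]
      congr 2
      ring
    exact hμ.1 _ (τ.injective hfix)

/-- Since `τ` never preserves a `τ * μ`-orbit, `P` may be taken to consist of the points whose orbit
precedes its image under `τ` in some linear order of the set of orbits. -/
theorem exists_isAlternating (hμ : IsPerfectMatching μ) (hτ : IsPerfectMatching τ) :
    ∃ P, IsAlternating μ P ∧ IsAlternating τ P := by
  obtain ⟨_, _⟩ := exists_wellFoundedLT (Quotient (Perm.SameCycle.setoid (τ * μ)))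
  let orb (x : X) := Quotient.mk (Perm.SameCycle.setoid (τ * μ)) x
  have orb_mul (x : X) : orb (τ (μ x)) = orb x :=
    Quotient.sound (Perm.sameCycle_apply_left.2 (Perm.SameCycle.refl (τ * μ) x))
  have orb_ne (x : X) : orb x ≠ orb (τ x) := fun h ↦
    let ⟨j, hj⟩ := Quotient.exact h
    hμ.mul_zpow_apply_ne hτ j x hj
  have orb_matching (x : X) : orb (μ x) = orb (τ x) := by
    simpa [hμ.apply_apply] using (orb_mul (μ x)).symm
  refine ⟨{x | orb x < orb (τ x)}, fun x ↦ ?_, fun x ↦ ?_⟩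
  · simp only [Set.mem_ofPred_eq, orb_mul, orb_matching, not_lt]
    exact (orb_ne x).symm.le_iff_lt.symm
  · simp only [Set.mem_ofPred_eq, hτ.apply_apply, not_lt]
    exact (orb_ne x).symm.le_iff_lt.symm

end IsPerfectMatching

namespace IsAlternating

theorem symmDiff_iff (hP : IsAlternating μ P) (Q : Set X) :
    IsAlternating μ (symmDiff P Q) ↔ ∀ x, μ x ∈ Q ↔ x ∈ Q := by
  refine forall_congr' fun x ↦ ?_
  have := hP x
  simp only [Set.mem_symmDiff]
  tauto

/-- The alternating sets form a torsor under symmetric difference with the invariant sets. -/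
theorem card_forall_isAlternating [Finite X] {S : Set (Perm X)} (hP : ∀ s ∈ S, IsAlternating s P) :
    Nat.card {Q : Set X // ∀ s ∈ S, IsAlternating s Q} =
      2 ^ orbitCount (Subgroup.closure S) := by
  have translate : {Q : Set X // ∀ s ∈ S, ∀ x, s • x ∈ Q ↔ x ∈ Q} ≃
      {Q : Set X // ∀ s ∈ S, IsAlternating s Q} :=
    (symmDiff_right_involutive P).toPerm.subtypeEquiv fun Q ↦
      forall₂_congr fun s hs ↦ ((hP s hs).symmDiff_iff Q).symm
  rw [← Nat.card_congr translate, card_invariant_sets, orbitCount]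

theorem card_eq [Finite X] (hP : IsAlternating μ P) {n : ℕ} (hX : Nat.card X = 2 * n) :
    Nat.card P = n := by
  classical
  have exchange : P ≃ (Pᶜ : Set X) := μ.subtypeEquiv fun x ↦ by simp [hP x]
  rw [← Nat.card_congr (Equiv.Set.sumCompl P), Nat.card_sum, ← Nat.card_congr exchange] at hX
  lia

/-- The restriction of `τ * μ` to `P`. When `τ` pairs the endpoints of each interval, it takes the
initial point of a directed interval to that of the interval preceding it along the cycle. -/
def returnPerm (hμ : IsAlternating μ P) (hτ : IsAlternating τ P) : Perm P :=
  (τ * μ).subtypePerm fun x ↦ by simp [hμ x, hτ (μ x)]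

@[simp]
theorem coe_returnPerm_apply (hμ : IsAlternating μ P) (hτ : IsAlternating τ P) (x : P) :
    (hμ.returnPerm hτ x : X) = τ (μ x) :=
  rfl

theorem orbitRel_zpowers_returnPerm_le_comap_val (hμ : IsAlternating μ P) (hτ : IsAlternating τ P) :
    orbitRel (Subgroup.zpowers (hμ.returnPerm hτ)) P ≤
      (orbitRel (Subgroup.closure {μ, τ}) X).comap Subtype.val := by
  have hrel := orbitRel_closure_le_iff.1 (le_refl (orbitRel (Subgroup.closure {μ, τ}) X))
  rw [Subgroup.zpowers_eq_closure, orbitRel_closure_le_iff]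
  rintro _ rfl x
  exact (orbitRel (Subgroup.closure {μ, τ}) X).trans (hrel τ (by simp) (μ x)) (hrel μ (by simp) x)

section InitialPoint

variable [DecidablePred (· ∈ P)]

/-- The point of `P` among the two points `x` and `τ x`: the initial point of the directed
interval with endpoint `x`, when `τ` is the interval pairing. -/
def initialPoint (hτ : IsAlternating τ P) (x : X) : P :=
  if hx : x ∈ P then ⟨x, hx⟩ else ⟨τ x, (hτ x).2 hx⟩

theorem initialPoint_of_mem (hτ : IsAlternating τ P) {x : X} (hx : x ∈ P) :
    hτ.initialPoint x = ⟨x, hx⟩ :=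
  dif_pos hx

theorem coe_initialPoint_of_notMem (hτ : IsAlternating τ P) {x : X} (hx : x ∉ P) :
    (hτ.initialPoint x : X) = τ x := by
  rw [initialPoint, dif_neg hx]

theorem initialPoint_apply_eq (hP : IsAlternating τ P) (hτ : IsPerfectMatching τ) (x : X) :
    hP.initialPoint (τ x) = hP.initialPoint x := by
  by_cases hx : x ∈ P
  · have hτx : τ x ∉ P := fun h ↦ (hP x).1 h hx
    ext
    rw [hP.coe_initialPoint_of_notMem hτx, hP.initialPoint_of_mem hx, hτ.apply_apply]
  · ext
    rw [hP.coe_initialPoint_of_notMem hx, hP.initialPoint_of_mem ((hP x).2 hx)]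

theorem initialPoint_apply_eq_returnPerm (hμ : IsAlternating μ P) (hτ : IsAlternating τ P) {x : X}
    (hx : x ∈ P) : hτ.initialPoint (μ x) = hμ.returnPerm hτ (hτ.initialPoint x) := by
  have hμx : μ x ∉ P := fun h ↦ (hμ x).1 h hx
  ext
  rw [hτ.coe_initialPoint_of_notMem hμx, hτ.initialPoint_of_mem hx, coe_returnPerm_apply]

theorem sameCycle_returnPerm_initialPoint (hμP : IsAlternating μ P) (hτP : IsAlternating τ P)
    (hμ : IsPerfectMatching μ) (x : X) :
    (hμP.returnPerm hτP).SameCycle (hτP.initialPoint x) (hτP.initialPoint (μ x)) := by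
  by_cases hx : x ∈ P
  · rw [initialPoint_apply_eq_returnPerm hμP hτP hx]
    exact Perm.sameCycle_apply_right.2 (Perm.SameCycle.refl _ _)
  · have key := initialPoint_apply_eq_returnPerm hμP hτP ((hμP x).2 hx)
    rw [hμ.apply_apply] at key
    rw [key]
    exact Perm.sameCycle_apply_left.2 (Perm.SameCycle.refl _ _)

theorem orbitRel_closure_initialPoint (hτ : IsAlternating τ P) (μ : Perm X) (x : X) :
    orbitRel (Subgroup.closure {μ, τ}) X (hτ.initialPoint x) x := by
  by_cases hx : x ∈ P
  · rw [hτ.initialPoint_of_mem hx]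
  · rw [hτ.coe_initialPoint_of_notMem hx]
    exact orbitRel_closure_le_iff.1 le_rfl τ (by simp) x

theorem orbitRel_closure_le_comap_initialPoint (hμP : IsAlternating μ P) (hτP : IsAlternating τ P)
    (hμ : IsPerfectMatching μ) (hτ : IsPerfectMatching τ) :
    orbitRel (Subgroup.closure {μ, τ}) X ≤
      (orbitRel (Subgroup.zpowers (hμP.returnPerm hτP)) P).comap hτP.initialPoint := by
  rw [orbitRel_closure_le_iff]
  rintro s (rfl | rfl) x
  · exact orbitRel_zpowers_iff_sameCycle.2 (sameCycle_returnPerm_initialPoint hμP hτP hμ x)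
  · rw [Setoid.comap_rel, Perm.smul_def, hτP.initialPoint_apply_eq hτ]

end InitialPoint

theorem orbitCount_zpowers_returnPerm (hμP : IsAlternating μ P) (hτP : IsAlternating τ P)
    (hμ : IsPerfectMatching μ) (hτ : IsPerfectMatching τ) :
    orbitCount (Subgroup.zpowers (hμP.returnPerm hτP)) =
      orbitCount (Subgroup.closure {μ, τ}) := by
  classical
  exact Nat.card_congr
    { toFun := Quotient.map Subtype.val (orbitRel_zpowers_returnPerm_le_comap_val hμP hτP)
      invFun := Quotient.map hτP.initialPoint (orbitRel_closure_le_comap_initialPoint hμP hτP hμ hτ)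
      left_inv := by
        rintro ⟨x⟩
        exact congrArg _ (hτP.initialPoint_of_mem x.2)
      right_inv := by
        rintro ⟨x⟩
        exact Quotient.sound (hτP.orbitRel_closure_initialPoint μ x) }

theorem orbitCount_closure_singleton (hP : IsAlternating τ P) (hτ : IsPerfectMatching τ) :
    orbitCount (Subgroup.closure {τ}) = Nat.card P := by
  have returnPerm_self : hP.returnPerm hP = 1 := by
    ext x
    exact hτ.apply_apply x
  rw [← Set.pair_eq_singleton, ← orbitCount_zpowers_returnPerm hP hP hτ hτ, returnPerm_self,
    orbitCount_zpowers_one]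

section Conj

variable [DecidablePred (· ∈ P)]

theorem conj_ofSubtype (hτ : IsAlternating τ P) (σ : Perm P) :
    IsAlternating ((Perm.ofSubtype σ)⁻¹ * τ * Perm.ofSubtype σ) P := by
  intro x
  have mem_iff (ρ : Perm P) (y : X) : Perm.ofSubtype ρ y ∈ P ↔ y ∈ P :=
    Perm.ofSubtype_apply_mem_iff_mem ρ y
  rw [← map_inv, Perm.mul_apply, Perm.mul_apply, mem_iff, hτ, mem_iff]

theorem conj_ofSubtype_returnPerm (hμP : IsAlternating μ P) (hτP : IsAlternating τ P)
    (hμ : IsPerfectMatching μ) (hτ : IsPerfectMatching τ) :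
    (Perm.ofSubtype (hμP.returnPerm hτP))⁻¹ * τ * Perm.ofSubtype (hμP.returnPerm hτP) = μ := by
  rw [mul_assoc, inv_mul_eq_iff_eq_mul]
  ext x
  simp only [Perm.mul_apply]
  by_cases hx : x ∈ P
  · have hμx : μ x ∉ P := fun h ↦ (hμP x).1 h hx
    rw [Perm.ofSubtype_apply_of_mem _ hx, Perm.ofSubtype_apply_of_not_mem _ hμx,
      coe_returnPerm_apply, hτ.apply_apply]
  · rw [Perm.ofSubtype_apply_of_not_mem _ hx, Perm.ofSubtype_apply_of_mem _ ((hμP x).2 hx),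
      coe_returnPerm_apply, hμ.apply_apply]

theorem returnPerm_conj_ofSubtype (hP : IsAlternating τ P) (hτ : IsPerfectMatching τ)
    (σ : Perm P) : (hP.conj_ofSubtype σ).returnPerm hP = σ := by
  ext x
  have hτσ : τ (σ x) ∉ P := fun h ↦ (hP _).1 h (σ x).2
  rw [coe_returnPerm_apply, Perm.mul_apply, Perm.mul_apply, Perm.ofSubtype_apply_coe, ← map_inv,
    Perm.ofSubtype_apply_of_not_mem _ hτσ, hτ.apply_apply]

/-- Once the intervals are directed by `P`, a compatible matching amounts to a choice of the
predecessor of each interval. Its inverse conjugates `τ` by a permutation of `P` extended by the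
identity. -/
def matchingEquivPerm (hP : IsAlternating τ P) (hτ : IsPerfectMatching τ) :
    {μ : Perm X // IsPerfectMatching μ ∧ IsAlternating μ P} ≃ Perm P where
  toFun μ := μ.2.2.returnPerm hP
  invFun σ := ⟨_, hτ.conj (Perm.ofSubtype σ), hP.conj_ofSubtype σ⟩
  left_inv μ := Subtype.ext (conj_ofSubtype_returnPerm μ.2.2 hP μ.2.1 hτ)
  right_inv σ := hP.returnPerm_conj_ofSubtype hτ σ

end Conj

theorem card_matching_orbitCount_eq_stirlingFirst [Finite X] (hP : IsAlternating τ P)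
    (hτ : IsPerfectMatching τ) {n : ℕ} (hP_card : Nat.card P = n) (k : ℕ) :
    Nat.card {μ : Perm X // (IsPerfectMatching μ ∧ IsAlternating μ P) ∧
      orbitCount (Subgroup.closure {μ, τ}) = k} = stirlingFirst n k := by
  classical
  rw [← card_perm_orbitCount_eq_stirlingFirst hP_card k]
  refine Nat.card_congr ((Equiv.subtypeSubtypeEquivSubtypeInter _ _).symm.trans
    ((hP.matchingEquivPerm hτ).subtypeEquiv fun μ ↦ ?_))
  rw [← orbitCount_zpowers_returnPerm μ.2.2 hP μ.2.1 hτ]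
  rfl

end IsAlternating

namespace IsPerfectMatching

theorem card_isAlternating [Finite X] (hτ : IsPerfectMatching τ) {n : ℕ}
    (hX : Nat.card X = 2 * n) : Nat.card {P : Set X // IsAlternating τ P} = 2 ^ n := by
  obtain ⟨P, hP, -⟩ := hτ.exists_isAlternating hτ
  have count := IsAlternating.card_forall_isAlternating (S := {τ}) (by simpa using hP)
  simpa [hP.orbitCount_closure_singleton hτ, hP.card_eq hX] using count

theorem card_isAlternating_pair [Finite X] (hμ : IsPerfectMatching μ) (hτ : IsPerfectMatching τ) :
    Nat.card {P : {P : Set X // IsAlternating τ P} // IsAlternating μ P} =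
      2 ^ orbitCount (Subgroup.closure {μ, τ}) := by
  obtain ⟨P, hμP, hτP⟩ := hμ.exists_isAlternating hτ
  rw [← IsAlternating.card_forall_isAlternating (P := P) (by simpa using ⟨hμP, hτP⟩)]
  exact Nat.card_congr ((Equiv.subtypeSubtypeEquivSubtypeInter _ _).trans
    (Equiv.subtypeEquivRight fun Q ↦ by simp [and_comm]))

theorem card_matching_mul_two_pow [Finite X] (hτ : IsPerfectMatching τ) {n : ℕ}
    (hX : Nat.card X = 2 * n) (k : ℕ) :
    Nat.card {μ : Perm X // IsPerfectMatching μ ∧ orbitCount (Subgroup.closure {μ, τ}) = k} *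
      2 ^ k = 2 ^ n * stirlingFirst n k := by
  rw [← hτ.card_isAlternating hX]
  refine natCard_mul_eq_natCard_mul (fun μ P ↦ IsAlternating μ.1 P.1) ?_ ?_
  · rintro ⟨μ, hμ, rfl⟩
    exact hμ.card_isAlternating_pair hτ
  · rintro ⟨P, hP⟩
    rw [← hP.card_matching_orbitCount_eq_stirlingFirst hτ (hP.card_eq hX) k]
    exact Nat.card_congr ((Equiv.subtypeSubtypeEquivSubtypeInter _ (IsAlternating · P)).trans
      (Equiv.subtypeEquivRight fun μ ↦ and_right_comm))

end IsPerfectMatching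

end Alternating

theorem isPerfectMatching_intervalPerm (n : ℕ) : IsPerfectMatching (intervalPerm n) := by
  have hinv : Function.Involutive (intervalPerm n) := Function.Involutive.toPerm_involutive _
  refine ⟨fun x hx ↦ ?_, Equiv.ext hinv⟩
  have : (if x.1 % 2 = 0 then x.1 + 1 else x.1 - 1) = x.1 := congrArg Fin.val hx
  lia

theorem cyclationCount_eq_card_matching (n k : ℕ) :
    cyclationCount n k = Nat.card {μ : Perm (Fin (2 * n)) //
      IsPerfectMatching μ ∧ orbitCount (Subgroup.closure {μ, intervalPerm n}) = k} :=
  Nat.card_congr (Equiv.subtypeSubtypeEquivSubtypeInter IsPerfectMatching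
    fun μ ↦ orbitCount (Subgroup.closure {μ, intervalPerm n}) = k)

/-- For every `n ≥ 1` and `1 ≤ k ≤ n`, the number of `n`-cyclations with exactly `k`
cycles satisfies `⟦n,k⟧ = 2^(n-k) * [n,k]`. -/
theorem cyclationCount_eq_two_pow_mul_stirling (n k : ℕ) (hn : 1 ≤ n) (hk1 : 1 ≤ k)
    (hkn : k ≤ n) :
    cyclationCount n k = 2 ^ (n - k) * stirlingFirst n k := by
  have directed_count : cyclationCount n k * 2 ^ k = 2 ^ n * stirlingFirst n k := by
    rw [cyclationCount_eq_card_matching]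
    exact (isPerfectMatching_intervalPerm n).card_matching_mul_two_pow (Nat.card_fin (2 * n)) k
  refine Nat.eq_of_mul_eq_mul_right (Nat.two_pow_pos k) ?_
  rw [directed_count, mul_right_comm, ← pow_add, Nat.sub_add_cancel hkn]
end

section
/- For every n ≥ 1 and 1 ≤ k ≤ n, the number ⟦n,k⟧ of n-cyclations with exactly k cycles equals the sum, over all cycle structures (i_1,…,i_n) with ∑_{l=1}^{n} l·i_l = n and ∑_{l=1}^{n} i_l = k, of n!·2^n / ∏_{l=1}^{n} ((2l)^{i_l}·i_l!). -/
/-!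
A last interval can be added to an `n`-cyclation either as a cycle of its own, or in front of one of
the `2 * n` endpoints, which lengthens the cycle through that endpoint. Every `(n + 1)`-cyclation
arises exactly once, so `⟦n+1, k+1⟧ = ⟦n, k⟧ + 2 * n * ⟦n, k+1⟧`.

The sum over cycle structures, divided by `n! * 2 ^ n`, is the coefficient `A n k` of
`x ^ n * y ^ k` in `exp (y * ∑ l ≥ 1, x ^ l / (2 * l))`. Applying `x * ∂/∂x` to this series gives
`2 * n * A n (k+1) = ∑ m < n, A m k`, and the difference of two consecutive instances is the same
recurrence for `n! * 2 ^ n * A n k`.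
-/

open Equiv

section Cycles

variable {X Y : Type*}

/-- The cycles, i.e. connected components, of the multigraph with edges `{x, σ x}` and `{x, τ x}`.
A bare `Quot` by the two kinds of edges is used so that maps out of it only have to be checked on
`σ` and `τ`. -/
def Cycles (σ τ : Perm X) : Type _ :=
  Quot fun x y ↦ σ x = y ∨ τ x = y

namespace Cycles

/-- The cycle through a given vertex. -/
def mk (σ τ : Perm X) (x : X) : Cycles σ τ :=
  Quot.mk _ x

theorem mk_apply_left (σ τ : Perm X) (x : X) : mk σ τ (σ x) = mk σ τ x :=
  (Quot.sound (.inl rfl)).symm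

theorem mk_apply_right (σ τ : Perm X) (x : X) : mk σ τ (τ x) = mk σ τ x :=
  (Quot.sound (.inr rfl)).symm

/-- The map on cycles induced by a map on vertices that is constant along both kinds of edges. -/
def lift {σ τ : Perm X} (f : X → Y) (hσ : ∀ x, f (σ x) = f x) (hτ : ∀ x, f (τ x) = f x) :
    Cycles σ τ → Y :=
  Quot.lift f <| by
    rintro x _ (rfl | rfl)
    exacts [(hσ x).symm, (hτ x).symm]

instance (σ τ : Perm X) [Finite X] : Finite (Cycles σ τ) :=
  inferInstanceAs (Finite (Quot _))

theorem card_eq_zero_iff [Finite X] {σ τ : Perm X} : Nat.card (Cycles σ τ) = 0 ↔ IsEmpty X := by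
  rw [Finite.card_eq_zero_iff]
  exact ⟨fun h ↦ ⟨fun x ↦ h.elim (mk σ τ x)⟩, fun _ ↦ Quot.instIsEmpty⟩

theorem mk_apply_of_mem_closure {σ τ g : Perm X} (hg : g ∈ Subgroup.closure {σ, τ}) (x : X) :
    mk σ τ (g x) = mk σ τ x := by
  induction hg using Subgroup.closure_induction generalizing x with
  | mem g hg =>
    obtain rfl | rfl := hg
    exacts [mk_apply_left _ _ x, mk_apply_right _ _ x]
  | one => rfl
  | mul g h _ _ ihg ihh => rw [Perm.mul_apply, ihg, ihh]
  | inv g _ ihg => rw [← ihg, ← Perm.mul_apply, mul_inv_cancel, Perm.one_apply]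

/-- The cycles are the orbits of the group generated by the two permutations. -/
def equivOrbits (σ τ : Perm X) :
    Cycles σ τ ≃ MulAction.orbitRel.Quotient (Subgroup.closure {σ, τ}) X where
  toFun := lift (fun x ↦ (⟦x⟧ : MulAction.orbitRel.Quotient _ _))
    (fun _ ↦ Quotient.sound ⟨⟨σ, Subgroup.subset_closure (.inl rfl)⟩, rfl⟩)
    (fun _ ↦ Quotient.sound ⟨⟨τ, Subgroup.subset_closure (.inr rfl)⟩, rfl⟩)
  invFun := Quotient.lift (mk σ τ) <| by
    rintro _ y ⟨g, rfl⟩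
    exact mk_apply_of_mem_closure g.2 y
  left_inv := by rintro ⟨x⟩; rfl
  right_inv := by rintro ⟨x⟩; rfl

/-- Relabelling the vertices does not change the cycles. -/
def permCongrEquiv (e : X ≃ Y) (σ τ : Perm X) :
    Cycles (e.permCongr σ) (e.permCongr τ) ≃ Cycles σ τ :=
  (Quot.congr e fun x y ↦ by simp).symm

/-- The cycles of a disjoint union. -/
def sumCongrEquiv (σ τ : Perm X) (σ' τ' : Perm Y) :
    Cycles (σ.sumCongr σ') (τ.sumCongr τ') ≃ Cycles σ τ ⊕ Cycles σ' τ' where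
  toFun := lift (Sum.map (mk σ τ) (mk σ' τ'))
    (by rintro (x | y) <;> simp [mk_apply_left])
    (by rintro (x | y) <;> simp [mk_apply_right])
  invFun := Sum.elim
    (lift (fun x ↦ mk _ _ (Sum.inl x)) (fun x ↦ mk_apply_left _ _ (Sum.inl x))
      (fun x ↦ mk_apply_right _ _ (Sum.inl x)))
    (lift (fun y ↦ mk _ _ (Sum.inr y)) (fun y ↦ mk_apply_left _ _ (Sum.inr y))
      (fun y ↦ mk_apply_right _ _ (Sum.inr y)))
  left_inv := by rintro ⟨x | y⟩ <;> rfl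
  right_inv := by rintro (c | c) <;> obtain ⟨x⟩ := c <;> rfl

theorem mk_elim_sumCongr (a : X) (σ τ : Perm X) (y : X ⊕ Bool) :
    mk σ τ (Sum.elim id (fun _ ↦ a) (σ.sumCongr boolNot y)) =
      mk σ τ (Sum.elim id (fun _ ↦ a) y) := by
  rcases y with x | b
  exacts [mk_apply_left σ τ x, rfl]

theorem card_boolNot : Nat.card (Cycles boolNot boolNot) = 1 := by
  rw [Nat.card_eq_one_iff_unique]
  refine ⟨⟨?_⟩, ⟨mk _ _ true⟩⟩
  have mk_eq (b : Bool) : mk boolNot boolNot b = mk _ _ true := by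
    cases b
    exacts [mk_apply_left _ _ true, rfl]
  rintro ⟨a⟩ ⟨b⟩
  exact (mk_eq a).trans (mk_eq b).symm

end Cycles

end Cycles

theorem cycNumCycles_eq_card_cycles {n : ℕ} (c : Cyclation n) :
    cycNumCycles c = Nat.card (Cycles c.1 (intervalPerm n)) :=
  (Nat.card_congr (Cycles.equivOrbits _ _)).symm

section Matching

variable {X Y : Type*}

/-- A perfect matching, encoded as a fixed-point-free involution. -/
def IsMatching (μ : Perm X) : Prop :=
  (∀ x, μ x ≠ x) ∧ μ * μ = 1

theorem IsMatching.apply_apply {μ : Perm X} (hμ : IsMatching μ) (x : X) : μ (μ x) = x :=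
  Perm.congr_fun hμ.2 x

theorem isMatching_permCongr_iff (e : X ≃ Y) {μ : Perm X} :
    IsMatching (e.permCongr μ) ↔ IsMatching μ := by
  have involution_iff : e.permCongr μ * e.permCongr μ = 1 ↔ μ * μ = 1 := by
    rw [← permCongrHom_coe, ← map_mul, map_eq_one_iff _ e.permCongrHom.injective]
  simp [IsMatching, involution_iff, ← e.forall_congr_right (q := fun y ↦ e (μ (e.symm y)) ≠ y)]

theorem isMatching_sumCongr_iff {σ : Perm X} {τ : Perm Y} :
    IsMatching (σ.sumCongr τ) ↔ IsMatching σ ∧ IsMatching τ := by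
  simp only [IsMatching, Perm.ext_iff, Perm.mul_apply, Perm.one_apply, sumCongr_apply, ne_eq,
    Sum.forall, Sum.map_inl, Sum.map_inr, Sum.inl.injEq, Sum.inr.injEq]
  tauto

theorem isMatching_bool_iff {β : Perm Bool} : IsMatching β ↔ β = boolNot := by
  constructor
  · intro hβ
    ext1 b
    exact Bool.eq_not_of_ne (hβ.1 b)
  · rintro rfl
    exact ⟨by decide, by decide⟩

theorem IsMatching.exists_eq_sumCongr_boolNot [Finite X] {μ : Perm (X ⊕ Bool)}
    (hμ : IsMatching μ) (h : μ (Sum.inr true) = Sum.inr false) :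
    ∃ σ : Perm X, μ = σ.sumCongr boolNot := by
  have mapsTo_inr : Set.MapsTo μ (Set.range Sum.inr) (Set.range Sum.inr) := by
    rintro _ ⟨_ | _, rfl⟩
    · exact ⟨true, by rw [← h, hμ.apply_apply]⟩
    · exact ⟨false, h.symm⟩
  obtain ⟨⟨σ, β⟩, rfl⟩ := Perm.mem_sumCongrHom_range_of_perm_mapsTo_inl
    ((Perm.perm_mapsTo_inl_iff_mapsTo_inr μ).2 mapsTo_inr)
  obtain rfl := isMatching_bool_iff.1 (isMatching_sumCongr_iff.1 hμ).2
  exact ⟨σ, rfl⟩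

end Matching

section Splice

variable {X : Type*} [DecidableEq X]

/-- The transposition that makes room for the new pair of points in `splice`. -/
def spliceSwap (z : Option X) : Perm (X ⊕ Bool) :=
  swap (Sum.inr false) (z.elim (Sum.inr false) Sum.inl)

/-- Insert a new pair of points `inr false`, `inr true` into the permutation `σ`: either on its
own (`z = none`), or in front of the point `a` (`z = some a`). When `σ` is a matching, the latter
replaces the edge `{a, σ a}` by the edges `{a, inr true}` and `{inr false, σ a}`. -/
def splice (z : Option X) (σ : Perm X) : Perm (X ⊕ Bool) :=
  (spliceSwap z).permCongr (σ.sumCongr boolNot)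

theorem spliceSwap_none : spliceSwap (none : Option X) = 1 :=
  swap_self _

@[simp]
theorem spliceSwap_symm (z : Option X) : (spliceSwap z).symm = spliceSwap z :=
  symm_swap _ _

@[simp]
theorem spliceSwap_apply_apply (z : Option X) (y : X ⊕ Bool) :
    spliceSwap z (spliceSwap z y) = y :=
  Equiv.congr_fun (swap_swap _ _) y

@[simp]
theorem spliceSwap_inr_false (z : Option X) :
    spliceSwap z (Sum.inr false) = z.elim (Sum.inr false) Sum.inl :=
  swap_apply_left _ _

@[simp]
theorem spliceSwap_inr_true (z : Option X) : spliceSwap z (Sum.inr true) = Sum.inr true :=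
  swap_apply_of_ne_of_ne (by simp) (by cases z <;> simp)

theorem splice_apply (z : Option X) (σ : Perm X) (y : X ⊕ Bool) :
    splice z σ y = spliceSwap z (σ.sumCongr boolNot (spliceSwap z y)) := by
  simp [splice]

theorem splice_none (σ : Perm X) : splice none σ = σ.sumCongr boolNot := by
  ext1 y
  simp [splice_apply, spliceSwap_none]

theorem splice_inr_true (z : Option X) (σ : Perm X) :
    splice z σ (Sum.inr true) = z.elim (Sum.inr false) Sum.inl := by
  simp [splice_apply, boolNot]

theorem isMatching_splice_iff (z : Option X) {σ : Perm X} :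
    IsMatching (splice z σ) ↔ IsMatching σ := by
  rw [splice, isMatching_permCongr_iff, isMatching_sumCongr_iff, isMatching_bool_iff]
  exact and_iff_left rfl

theorem splice_injective :
    Function.Injective fun p : Option X × Perm X ↦ splice p.1 p.2 := by
  rintro ⟨z, σ⟩ ⟨z', σ'⟩ (h : splice z σ = splice z' σ')
  obtain rfl : z = z' := by
    have elim_eq := splice_inr_true z σ
    rw [h, splice_inr_true] at elim_eq
    cases z <;> cases z' <;> simp_all
  have pair_eq : (σ, boolNot) = (σ', boolNot) :=
    Perm.sumCongrHom_injective ((spliceSwap z).permCongr.injective h)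
  rw [(Prod.mk.inj pair_eq).1]

theorem IsMatching.exists_splice_eq [Finite X] {μ : Perm (X ⊕ Bool)} (hμ : IsMatching μ) :
    ∃ (z : Option X) (σ : Perm X), splice z σ = μ := by
  obtain ⟨z, hz⟩ : ∃ z : Option X, μ (Sum.inr true) = z.elim (Sum.inr false) Sum.inl := by
    rcases h : μ (Sum.inr true) with a | _ | _
    exacts [⟨some a, rfl⟩, ⟨none, rfl⟩, absurd h (hμ.1 _)]
  obtain ⟨σ, hσ⟩ :=
    ((isMatching_permCongr_iff (spliceSwap z)).2 hμ).exists_eq_sumCongr_boolNot <| by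
      rw [permCongr_apply, spliceSwap_symm, spliceSwap_inr_true, hz, ← spliceSwap_inr_false,
        spliceSwap_apply_apply]
  refine ⟨z, σ, ?_⟩
  ext1 y
  simp [splice, ← hσ]

/-- Every matching of `X ⊕ Bool` arises in a unique way by splicing the pair `inr false`,
`inr true` into a matching of `X`. -/
noncomputable def spliceEquiv [Finite X] :
    {p : Option X × Perm X // IsMatching p.2} ≃ {μ : Perm (X ⊕ Bool) // IsMatching μ} :=
  Equiv.ofBijective (fun p ↦ ⟨splice p.1.1 p.1.2, (isMatching_splice_iff _).2 p.2⟩)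
    ⟨fun _ _ h ↦ Subtype.ext (splice_injective (congrArg Subtype.val h)), fun ⟨μ, hμ⟩ ↦ by
      obtain ⟨z, σ, rfl⟩ := hμ.exists_splice_eq
      exact ⟨⟨(z, σ), (isMatching_splice_iff z).1 hμ⟩, rfl⟩⟩

namespace Cycles

theorem mk_splice_some_inr (a : X) (σ τ : Perm X) (b : Bool) :
    mk (splice (some a) σ) (τ.sumCongr boolNot) (Sum.inr b) = mk _ _ (Sum.inl a) := by
  have mk_inr_true : mk (splice (some a) σ) (τ.sumCongr boolNot) (Sum.inr true) =
      mk _ _ (Sum.inl a) := by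
    rw [← mk_apply_left, splice_inr_true, Option.elim_some]
  cases b
  · exact (mk_apply_right _ (τ.sumCongr boolNot) (Sum.inr true)).trans mk_inr_true
  · exact mk_inr_true

theorem mk_spliceSwap_some (a : X) (σ τ : Perm X) (y : X ⊕ Bool) :
    mk (splice (some a) σ) (τ.sumCongr boolNot) (spliceSwap (some a) y) = mk _ _ y := by
  rw [spliceSwap, Option.elim_some, swap_apply_def]
  split_ifs with hfalse ha
  · rw [hfalse, mk_splice_some_inr]
  · rw [ha, mk_splice_some_inr]
  · rfl

theorem mk_splice_some_inl_apply (a : X) (σ τ : Perm X) (x : X) :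
    mk (splice (some a) σ) (τ.sumCongr boolNot) (Sum.inl (σ x)) = mk _ _ (Sum.inl x) := by
  rw [← mk_spliceSwap_some, ← mk_spliceSwap_some _ _ _ (Sum.inl x),
    ← mk_apply_left _ _ (spliceSwap (some a) (Sum.inl x)), splice_apply, spliceSwap_apply_apply]
  rfl

theorem elim_spliceSwap_some (a : X) (y : X ⊕ Bool) :
    Sum.elim id (fun _ ↦ a) (spliceSwap (some a) y) = Sum.elim id (fun _ ↦ a) y := by
  rw [spliceSwap, Option.elim_some, swap_apply_def]
  split_ifs with hfalse ha
  · rw [hfalse]; rfl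
  · rw [ha]; rfl
  · rfl

/-- Splicing a new pair in front of `a` only lengthens the cycle through `a`: collapsing the pair
to `a` is a bijection on cycles. -/
def spliceSomeEquiv (a : X) (σ τ : Perm X) :
    Cycles (splice (some a) σ) (τ.sumCongr boolNot) ≃ Cycles σ τ where
  toFun := lift (fun y ↦ mk σ τ (Sum.elim id (fun _ ↦ a) y))
    (fun y ↦ by rw [splice_apply, elim_spliceSwap_some, mk_elim_sumCongr, elim_spliceSwap_some])
    (by
      rintro (x | b)
      exacts [mk_apply_right σ τ x, rfl])
  invFun := lift (fun x ↦ mk _ _ (Sum.inl x)) (mk_splice_some_inl_apply a σ τ)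
    (fun x ↦ mk_apply_right _ (τ.sumCongr boolNot) (Sum.inl x))
  left_inv := by
    rintro ⟨x | b⟩
    exacts [rfl, (mk_splice_some_inr a σ τ b).symm]
  right_inv := by rintro ⟨x⟩; rfl

theorem card_splice_none [Finite X] (σ τ : Perm X) :
    Nat.card (Cycles (splice none σ) (τ.sumCongr boolNot)) = Nat.card (Cycles σ τ) + 1 := by
  rw [splice_none, Nat.card_congr (sumCongrEquiv σ τ boolNot boolNot), Nat.card_sum, card_boolNot]

theorem card_splice_some (a : X) (σ τ : Perm X) :
    Nat.card (Cycles (splice (some a) σ) (τ.sumCongr boolNot)) = Nat.card (Cycles σ τ) :=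
  Nat.card_congr (spliceSomeEquiv a σ τ)

end Cycles

end Splice

section MatchingCount

/-- The number of matchings of `X` that form exactly `k` cycles together with the permutation `τ`.
For `τ = intervalPerm n` this is `⟦n, k⟧`. -/
noncomputable def matchingCount {X : Type*} (τ : Perm X) (k : ℕ) : ℕ :=
  Nat.card {μ : Perm X // IsMatching μ ∧ Nat.card (Cycles μ τ) = k}

theorem cyclationCount_eq_matchingCount (n k : ℕ) :
    cyclationCount n k = matchingCount (intervalPerm n) k := by
  simp only [cyclationCount, cycNumCycles_eq_card_cycles]
  exact Nat.card_congr (subtypeSubtypeEquivSubtypeInter IsMatching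
    fun μ ↦ Nat.card (Cycles μ (intervalPerm n)) = k)

variable {X Y : Type*}

theorem matchingCount_permCongr (e : X ≃ Y) (τ : Perm X) (k : ℕ) :
    matchingCount (e.permCongr τ) k = matchingCount τ k := by
  refine (Nat.card_congr (e.permCongr.subtypeEquiv fun μ ↦ ?_)).symm
  rw [isMatching_permCongr_iff, Nat.card_congr (Cycles.permCongrEquiv e μ τ)]

theorem matchingCount_sumCongr_boolNot [Finite X] (τ : Perm X) (k : ℕ) :
    matchingCount (τ.sumCongr boolNot) (k + 1) =
      matchingCount τ k + Nat.card X * matchingCount τ (k + 1) := by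
  classical
  have := Fintype.ofFinite X
  let HasCycles (z : Option X) (σ : Perm X) : Prop :=
    IsMatching σ ∧ Nat.card (Cycles (splice z σ) (τ.sumCongr boolNot)) = k + 1
  let toSpliced : {p : Option X × Perm X // HasCycles p.1 p.2} ≃
      {μ : Perm (X ⊕ Bool) // IsMatching μ ∧ Nat.card (Cycles μ (τ.sumCongr boolNot)) = k + 1} :=
    (subtypeSubtypeEquivSubtypeInter (fun p : Option X × Perm X ↦ IsMatching p.2) fun p ↦
      Nat.card (Cycles (splice p.1 p.2) (τ.sumCongr boolNot)) = k + 1).symm.trans <|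
    (spliceEquiv.subtypeEquiv fun _ ↦ Iff.rfl).trans <|
    subtypeSubtypeEquivSubtypeInter IsMatching fun μ ↦
      Nat.card (Cycles μ (τ.sumCongr boolNot)) = k + 1
  calc
    _ = Nat.card {p : Option X × Perm X // HasCycles p.1 p.2} := (Nat.card_congr toSpliced).symm
    _ = ∑ z, Nat.card {σ // HasCycles z σ} := by
      rw [Nat.card_congr (subtypeProdEquivSigmaSubtype HasCycles), Nat.card_sigma]
    _ = matchingCount τ k + Nat.card X * matchingCount τ (k + 1) := by
      simp [HasCycles, matchingCount, Cycles.card_splice_none, Cycles.card_splice_some]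

/-- The endpoints of `n + 1` intervals as those of `n` intervals and of a last one. -/
def endpointsSuccEquiv (n : ℕ) : Fin (2 * n) ⊕ Bool ≃ Fin (2 * (n + 1)) :=
  (sumCongr (Equiv.refl _) finTwoEquiv.symm).trans finSumFinEquiv

theorem intervalPerm_succ (n : ℕ) :
    intervalPerm (n + 1) =
      (endpointsSuccEquiv n).permCongr ((intervalPerm n).sumCongr boolNot) := by
  ext1 x
  obtain ⟨y, rfl⟩ := (endpointsSuccEquiv n).surjective x
  rw [permCongr_apply, symm_apply_apply]
  rcases y with x | _ | _
  · rfl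
  all_goals
    change (⟨_, _⟩ : Fin (2 * (n + 1))) = Fin.natAdd (2 * n) _
    ext
    simp [finTwoEquiv, finSumFinEquiv, endpointsSuccEquiv, boolNot]

theorem cyclationCount_succ_succ (n k : ℕ) :
    cyclationCount (n + 1) (k + 1) = cyclationCount n k + 2 * n * cyclationCount n (k + 1) := by
  rw [cyclationCount_eq_matchingCount, intervalPerm_succ, matchingCount_permCongr,
    matchingCount_sumCongr_boolNot, ← cyclationCount_eq_matchingCount,
    ← cyclationCount_eq_matchingCount, Nat.card_fin]

theorem cycNumCycles_eq_zero_iff {n : ℕ} (c : Cyclation n) : cycNumCycles c = 0 ↔ n = 0 := by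
  rw [cycNumCycles_eq_card_cycles, Cycles.card_eq_zero_iff, ← Fintype.card_eq_zero_iff,
    Fintype.card_fin, mul_eq_zero, or_iff_right two_ne_zero]

theorem cyclationCount_zero_zero : cyclationCount 0 0 = 1 := by
  have : Subsingleton (Cyclation 0) := inferInstanceAs (Subsingleton {_μ : Perm (Fin 0) // _})
  simp only [cyclationCount, cycNumCycles_eq_zero_iff, Nat.card_eq_one_iff_unique]
  exact ⟨inferInstance, ⟨⟨1, fun x ↦ x.elim0, mul_one 1⟩, trivial⟩⟩

theorem cyclationCount_zero_succ (k : ℕ) : cyclationCount 0 (k + 1) = 0 := by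
  simp [cyclationCount, (cycNumCycles_eq_zero_iff _).2 rfl]

theorem cyclationCount_succ_zero (n : ℕ) : cyclationCount (n + 1) 0 = 0 := by
  simp [cyclationCount, cycNumCycles_eq_zero_iff]

end MatchingCount

section ExpCoeff

variable {ι : Type*} [Fintype ι] [DecidableEq ι] {d : ι → ℕ}

/-- The multiplicity functions of the families of `k` parts of total size `n`, where the parts of
type `l` have size `d l` and `i l` counts the parts of type `l`. -/
def multiplicities (d : ι → ℕ) (n k : ℕ) : Finset (ι → ℕ) :=
  {i ∈ Finset.univ.piAntidiag k | ∑ l, d l * i l = n}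

theorem mem_multiplicities {n k : ℕ} {i : ι → ℕ} :
    i ∈ multiplicities d n k ↔ ∑ l, i l = k ∧ ∑ l, d l * i l = n := by
  simp [multiplicities]

theorem multiplicities_zero_zero : multiplicities d 0 0 = {0} := by
  simp [multiplicities]

theorem multiplicities_succ_zero (n : ℕ) : multiplicities d (n + 1) 0 = ∅ := by
  simp [multiplicities]

theorem multiplicities_zero_succ (hd : ∀ l, d l ≠ 0) (k : ℕ) : multiplicities d 0 (k + 1) = ∅ := by
  refine Finset.eq_empty_of_forall_notMem fun i hi ↦ ?_
  obtain ⟨card_eq, size_eq⟩ := mem_multiplicities.1 hi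
  simp_all

theorem filter_multiplicities_eq_map (l : ι) (n k : ℕ) :
    {i ∈ multiplicities d (n + d l) (k + 1) | i l ≠ 0} =
      (multiplicities d n k).map (addRightEmbedding (Pi.single l 1)) := by
  have add_single_mem_iff (j : ι → ℕ) :
      j + Pi.single l 1 ∈ multiplicities d (n + d l) (k + 1) ↔ j ∈ multiplicities d n k := by
    simp [mem_multiplicities, mul_add, Finset.sum_add_distrib, Pi.single_apply]
  ext i
  simp only [Finset.mem_filter, Finset.mem_map, addRightEmbedding_apply]
  constructor
  · rintro ⟨hi, hil⟩
    obtain ⟨j, rfl⟩ : ∃ j, j + Pi.single l 1 = i :=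
      ⟨i - Pi.single l 1, tsub_add_cancel_of_le <|
        update_le_iff.2 ⟨Nat.one_le_iff_ne_zero.2 hil, fun _ _ ↦ Nat.zero_le _⟩⟩
    exact ⟨j, (add_single_mem_iff j).1 hi, rfl⟩
  · rintro ⟨j, hj, rfl⟩
    exact ⟨(add_single_mem_iff j).2 hj, by simp⟩

variable {K : Type*} [Field K] (c : ι → K)

/-- The term of multi-degree `i` in the expansion of `exp (∑ l, c l)`. -/
def expTerm (i : ι → ℕ) : K :=
  ∏ l, c l ^ i l / (i l).factorial

/-- The coefficient of `x ^ n * y ^ k` in `exp (y * ∑ l, c l * x ^ d l)`. -/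
def expCoeff (d : ι → ℕ) (c : ι → K) (n k : ℕ) : K :=
  ∑ i ∈ multiplicities d n k, expTerm c i

theorem expCoeff_zero_zero : expCoeff d c 0 0 = 1 := by
  simp [expCoeff, expTerm, multiplicities_zero_zero]

theorem expCoeff_succ_zero (n : ℕ) : expCoeff d c (n + 1) 0 = 0 := by
  simp [expCoeff, multiplicities_succ_zero]

theorem expCoeff_zero_succ (hd : ∀ l, d l ≠ 0) (k : ℕ) : expCoeff d c 0 (k + 1) = 0 := by
  simp [expCoeff, multiplicities_zero_succ hd]

variable [CharZero K]

theorem add_one_mul_expTerm_add_single (i : ι → ℕ) (l : ι) :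
    (i l + 1) * expTerm c (i + Pi.single l 1) = c l * expTerm c i := by
  have succ_ne_zero : (i l + 1 : K) ≠ 0 := Nat.cast_add_one_ne_zero _
  have others_eq : ∏ m ∈ Finset.univ.erase l, c m ^ (i m + (Pi.single l 1 : ι → ℕ) m) /
      (i m + (Pi.single l 1 : ι → ℕ) m).factorial =
        ∏ m ∈ Finset.univ.erase l, c m ^ i m / ((i m).factorial : K) :=
    Finset.prod_congr rfl fun m hm ↦ by simp [Finset.ne_of_mem_erase hm]
  simp only [expTerm, ← Finset.mul_prod_erase _ _ (Finset.mem_univ l), Pi.add_apply, others_eq,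
    Pi.single_eq_same, pow_succ, Nat.factorial_succ, Nat.cast_mul, Nat.cast_succ]
  field_simp

theorem sum_mul_expTerm (d : ι → ℕ) (l : ι) (n k : ℕ) :
    ∑ i ∈ multiplicities d (n + d l) (k + 1), i l * expTerm c i = c l * expCoeff d c n k :=
  calc
    _ = ∑ i ∈ multiplicities d (n + d l) (k + 1) with i l ≠ 0, i l * expTerm c i :=
      (Finset.sum_filter_of_ne fun i _ hi (hil : i l = 0) ↦ hi (by simp [hil])).symm
    _ = ∑ j ∈ multiplicities d n k, c l * expTerm c j := by
      simp [filter_multiplicities_eq_map, ← add_one_mul_expTerm_add_single]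
    _ = c l * expCoeff d c n k := by rw [expCoeff, Finset.mul_sum]

/-- Comparison of coefficients after applying `x * ∂/∂x` to the exponential. -/
theorem mul_expCoeff_succ (d : ι → ℕ) (n k : ℕ) :
    n * expCoeff d c n (k + 1) =
      ∑ l with d l ≤ n, d l * (c l * expCoeff d c (n - d l) k) := by
  have sum_of_le {l : ι} (hl : d l ≤ n) :
      ∑ i ∈ multiplicities d n (k + 1), i l * expTerm c i = c l * expCoeff d c (n - d l) k := by
    rw [← sum_mul_expTerm, Nat.sub_add_cancel hl]
  have le_of_ne_zero {l : ι} {i : ι → ℕ} (hi : i ∈ multiplicities d n (k + 1))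
      (hil : i l ≠ 0) : d l ≤ n :=
    calc
      d l ≤ d l * i l := Nat.le_mul_of_pos_right _ (Nat.pos_of_ne_zero hil)
      _ ≤ ∑ l, d l * i l :=
        Finset.single_le_sum (f := fun l ↦ d l * i l) (by simp) (Finset.mem_univ l)
      _ = n := (mem_multiplicities.1 hi).2
  calc
    _ = ∑ i ∈ multiplicities d n (k + 1), ∑ l, d l * (i l * expTerm c i) := by
      rw [expCoeff, Finset.mul_sum]
      refine Finset.sum_congr rfl fun i hi ↦ ?_
      rw [← (mem_multiplicities.1 hi).2, Nat.cast_sum, Finset.sum_mul]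
      simp only [Nat.cast_mul, mul_assoc]
    _ = ∑ l, d l * ∑ i ∈ multiplicities d n (k + 1), i l * expTerm c i := by
      simp only [Finset.mul_sum]
      exact Finset.sum_comm
    _ = ∑ l with d l ≤ n, d l * ∑ i ∈ multiplicities d n (k + 1), i l * expTerm c i := by
      refine (Finset.sum_filter_of_ne fun l _ hl ↦ ?_).symm
      by_contra hdl
      refine hl (mul_eq_zero_of_right _ (Finset.sum_eq_zero fun i hi ↦ ?_))
      simp [of_not_not (mt (le_of_ne_zero hi) hdl)]
    _ = _ := Finset.sum_congr rfl fun l hl ↦ by rw [sum_of_le (Finset.mem_filter.1 hl).2]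

end ExpCoeff

section CycleCoeff

/-- The coefficient of `x ^ n * y ^ k` in `exp (y * ∑ l, x ^ l / (2 * l))`, where `l` runs from
`1` to `N`. Its value does not depend on `N ≥ n`; the free `N` keeps the index type fixed while
`n` varies. -/
def cycleCoeff (N n k : ℕ) : ℚ :=
  expCoeff (fun l : Fin N ↦ (l : ℕ) + 1) (fun l : Fin N ↦ (2 * ((l : ℕ) + 1 : ℚ))⁻¹) n k

theorem cycleCoeff_zero_zero (N : ℕ) : cycleCoeff N 0 0 = 1 :=
  expCoeff_zero_zero _

theorem cycleCoeff_zero_succ (N k : ℕ) : cycleCoeff N 0 (k + 1) = 0 :=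
  expCoeff_zero_succ _ (fun _ ↦ Nat.succ_ne_zero _) k

theorem cycleCoeff_succ_zero (N n : ℕ) : cycleCoeff N (n + 1) 0 = 0 :=
  expCoeff_succ_zero _ n

theorem two_mul_mul_cycleCoeff {N n : ℕ} (hn : n ≤ N) (k : ℕ) :
    2 * n * cycleCoeff N n (k + 1) = ∑ m ∈ Finset.range n, cycleCoeff N m k := by
  have term_eq (l : Fin N) (x : ℚ) :
      2 * (((l + 1 : ℕ) : ℚ) * ((2 * ((l : ℕ) + 1 : ℚ))⁻¹ * x)) = x := by
    have : ((l : ℕ) : ℚ) + 1 ≠ 0 := Nat.cast_add_one_ne_zero _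
    push_cast
    field_simp
  have filter_eq : {l ∈ Finset.range N | l + 1 ≤ n} = Finset.range n := by
    ext l
    simp only [Finset.mem_filter, Finset.mem_range]
    omega
  calc
    _ = ∑ l ∈ {l : Fin N | (l : ℕ) + 1 ≤ n}, cycleCoeff N (n - (l + 1)) k := by
      rw [cycleCoeff, mul_assoc, mul_expCoeff_succ, Finset.mul_sum]
      exact Finset.sum_congr rfl fun l _ ↦ term_eq l _
    _ = ∑ l ∈ Finset.range N with l + 1 ≤ n, cycleCoeff N (n - (l + 1)) k := by
      rw [Finset.sum_filter, Finset.sum_filter, Finset.sum_range]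
    _ = ∑ l ∈ Finset.range n, cycleCoeff N (n - 1 - l) k := by
      rw [filter_eq]
      exact Finset.sum_congr rfl fun l _ ↦ by rw [Nat.sub_sub, add_comm]
    _ = _ := Finset.sum_range_reflect (cycleCoeff N · k) n

theorem cycleCoeff_succ_succ {N n : ℕ} (hn : n + 1 ≤ N) (k : ℕ) :
    2 * (n + 1) * cycleCoeff N (n + 1) (k + 1) =
      cycleCoeff N n k + 2 * n * cycleCoeff N n (k + 1) := by
  rw [two_mul_mul_cycleCoeff (Nat.le_of_succ_le hn), add_comm (cycleCoeff N n k),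
    ← Finset.sum_range_succ, ← two_mul_mul_cycleCoeff hn, Nat.cast_succ]

theorem cyclationCount_eq_mul_cycleCoeff {N n : ℕ} (hn : n ≤ N) (k : ℕ) :
    (cyclationCount n k : ℚ) = n.factorial * 2 ^ n * cycleCoeff N n k := by
  induction n generalizing k with
  | zero =>
    cases k with
    | zero => simp [cyclationCount_zero_zero, cycleCoeff_zero_zero]
    | succ k => simp [cyclationCount_zero_succ, cycleCoeff_zero_succ]
  | succ n ih =>
    cases k with
    | zero => simp [cyclationCount_succ_zero, cycleCoeff_succ_zero]
    | succ k =>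
      have hn' : n ≤ N := Nat.le_of_succ_le hn
      calc (cyclationCount (n + 1) (k + 1) : ℚ)
          = cyclationCount n k + 2 * n * cyclationCount n (k + 1) := by
            exact_mod_cast cyclationCount_succ_succ n k
        _ = n.factorial * 2 ^ n * (cycleCoeff N n k + 2 * n * cycleCoeff N n (k + 1)) := by
            rw [ih hn', ih hn']
            ring
        _ = (n + 1).factorial * 2 ^ (n + 1) * cycleCoeff N (n + 1) (k + 1) := by
            rw [← cycleCoeff_succ_succ hn, Nat.factorial_succ, Nat.cast_mul, Nat.cast_succ]
            ring

end CycleCoeff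

/-- For `n ≥ 1` and `1 ≤ k ≤ n`, `⟦n,k⟧` equals the sum, over all cycle structures
`(i_1, …, i_n)` with `∑ l·i_l = n` and `∑ i_l = k`, of
`n! · 2^n / ∏_{l=1}^n ((2l)^{i_l} · i_l!)`.  Here the cycle structure is encoded as
`i : Fin n → ℕ`, with `i l` the number of cycles of length `l+1`. -/
theorem cyclationCount_eq_sum_over_cycle_structures (n k : ℕ) (hn : 1 ≤ n) (hk1 : 1 ≤ k)
    (hkn : k ≤ n) :
    (cyclationCount n k : ℚ)
      = ∑ᶠ (i : Fin n → ℕ)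
          (_ : (∑ l : Fin n, ((l : ℕ) + 1) * i l = n) ∧ (∑ l : Fin n, i l = k)),
          (Nat.factorial n * 2 ^ n : ℚ)
            / ∏ l : Fin n, ((2 * ((l : ℕ) + 1) : ℚ) ^ i l * Nat.factorial (i l)) := by
  have mem_iff (i : Fin n → ℕ) : i ∈ multiplicities (fun l : Fin n ↦ (l : ℕ) + 1) n k ↔
      (∑ l : Fin n, ((l : ℕ) + 1) * i l = n) ∧ (∑ l : Fin n, i l = k) :=
    mem_multiplicities.trans and_comm
  rw [cyclationCount_eq_mul_cycleCoeff le_rfl, cycleCoeff, expCoeff, Finset.mul_sum,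
    ← finsum_mem_finset_eq_sum]
  refine finsum_congr fun i ↦ finsum_congr_Prop (propext (mem_iff i)) fun _ ↦ ?_
  simp only [expTerm, div_eq_mul_inv, mul_inv, Finset.prod_mul_distrib,
    ← Finset.prod_inv_distrib, ← inv_pow]
end

section
/- The expected number of cycles of a random n-cyclation equals (1/2)·log n + log 2 + γ/2 + O(1/n) as n → ∞, where γ is Euler's constant; i.e. there exist constants C and N such that for all n ≥ N the absolute difference between the expected number of cycles and (1/2)·log n + log 2 + γ/2 is at most C/n. -/
/-- The expected number of cycles of a uniformly random `n`-cyclation: the average of the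
number of cycles over all `n`-cyclations. -/
noncomputable def avgNumCycles (n : ℕ) : ℝ :=
  (∑ c : Cyclation n, (cycNumCycles c : ℝ)) / Fintype.card (Cyclation n)

/-!
Deleting the last interval of an `(n + 1)`-cyclation, and joining the partners of its two endpoints
when they lie outside it, leaves an `n`-cyclation. Conversely the new interval can be inserted into
an `n`-cyclation in `2 n + 1` ways: closed up on itself, which creates a cycle, or spliced in at one
of the `2 n` endpoints, which does not change the number of cycles. Hence the expected number of
cycles grows by `1 / (2 n + 1)`, so that it equals `H_{2n} - H_n / 2`, and
`H_n = log n + γ + O(1 / n)`.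
-/

open Equiv MulAction

section JointOrbit

variable {α β γ : Type*}

theorem apply_eq_of_mem_orbit_closure {G : Type*} [Group G] [MulAction G α] {S : Set G}
    {f : α → β} (hf : ∀ g ∈ S, ∀ x, f (g • x) = f x) {x y : α}
    (h : x ∈ orbit (Subgroup.closure S) y) : f x = f y := by
  obtain ⟨⟨g, hg⟩, rfl⟩ := h
  change f (g • y) = f y
  induction hg using Subgroup.closure_induction generalizing y with
  | mem g hg => exact hf g hg y
  | one => rw [one_smul]
  | mul g h _ _ ihg ihh => rw [mul_smul, ihg, ihh]
  | inv g _ ihg => rw [← ihg (y := g⁻¹ • y), smul_inv_smul]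

theorem apply_permCongr_swap_iff [DecidableEq α] {f : α → β} {a b : α} (hab : f a = f b)
    (σ : Perm α) :
    (∀ x, f ((swap a b).permCongr σ x) = f x) ↔ ∀ x, f (σ x) = f x :=
  (swap a b).forall_congr fun x => by
    rw [permCongr_apply, symm_swap, apply_swap_eq_self hab, apply_swap_eq_self hab]

/-- The orbits of the group generated by two permutations. For a matching and the interval pairing
of a cyclation these are its cycles, and `cycNumCycles` counts them by definition. -/
abbrev JointOrbit (σ τ : Perm α) : Type _ :=
  orbitRel.Quotient (Subgroup.closure {σ, τ}) α

namespace JointOrbit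

/-- The joint orbit of a point. -/
def mk (σ τ : Perm α) (x : α) : JointOrbit σ τ :=
  Quotient.mk _ x

theorem mk_apply_left (σ τ : Perm α) (x : α) : mk σ τ (σ x) = mk σ τ x :=
  Quotient.sound ⟨⟨σ, Subgroup.subset_closure (by simp)⟩, rfl⟩

theorem mk_apply_right (σ τ : Perm α) (x : α) : mk σ τ (τ x) = mk σ τ x :=
  Quotient.sound ⟨⟨τ, Subgroup.subset_closure (by simp)⟩, rfl⟩

theorem ind {σ τ : Perm α} {p : JointOrbit σ τ → Prop} (h : ∀ x, p (mk σ τ x))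
    (q : JointOrbit σ τ) : p q :=
  Quotient.inductionOn q h

/-- The map on joint orbits induced by a function invariant under both permutations. -/
def lift {σ τ : Perm α} (f : α → γ) (hσ : ∀ x, f (σ x) = f x) (hτ : ∀ x, f (τ x) = f x) :
    JointOrbit σ τ → γ :=
  Quotient.lift f fun _ _ h => apply_eq_of_mem_orbit_closure (by simp [hσ, hτ]) h

/-- Joint orbits are transported along a relabelling of the points. -/
def permCongr (e : α ≃ β) (σ τ : Perm α) :
    JointOrbit σ τ ≃ JointOrbit (e.permCongr σ) (e.permCongr τ) where
  toFun := lift (fun x => mk _ _ (e x))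
    (fun x => by simpa using mk_apply_left (e.permCongr σ) (e.permCongr τ) (e x))
    (fun x => by simpa using mk_apply_right (e.permCongr σ) (e.permCongr τ) (e x))
  invFun := lift (fun y => mk _ _ (e.symm y))
    (fun y => by simp [mk_apply_left]) (fun y => by simp [mk_apply_right])
  left_inv := ind fun x => congrArg (mk _ _) (e.symm_apply_apply x)
  right_inv := ind fun y => congrArg (mk _ _) (e.apply_symm_apply y)

/-- Joint orbits of permutations acting separately on two summands. -/
def sumCongr (σ τ : Perm α) (σ' τ' : Perm β) :
    JointOrbit (Perm.sumCongr σ σ') (Perm.sumCongr τ τ') ≃ JointOrbit σ τ ⊕ JointOrbit σ' τ' where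
  toFun := lift (Sum.map (mk σ τ) (mk σ' τ'))
    (by rintro (x | x) <;> simp [mk_apply_left]) (by rintro (x | x) <;> simp [mk_apply_right])
  invFun := Sum.elim
    (lift (fun x => mk _ _ (Sum.inl x)) (fun x => mk_apply_left _ _ (Sum.inl x))
      (fun x => mk_apply_right _ _ (Sum.inl x)))
    (lift (fun x => mk _ _ (Sum.inr x)) (fun x => mk_apply_left _ _ (Sum.inr x))
      (fun x => mk_apply_right _ _ (Sum.inr x)))
  left_inv := ind (by rintro (x | x) <;> rfl)
  right_inv := by rintro (q | q) <;> induction q using ind <;> rfl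

theorem card_swap_swap : Nat.card (JointOrbit (swap (0 : Fin 2) 1) (swap 0 1)) = 1 := by
  refine Nat.card_eq_one_iff_exists.mpr ⟨mk _ _ 0, ind fun b => ?_⟩
  fin_cases b
  · rfl
  · exact mk_apply_left (swap 0 1) (swap 0 1) (0 : Fin 2)

/-- The permutation obtained from `σ` by letting the new point `Sum.inr 0` take the place of `x` and
exchanging `x` with the new point `Sum.inr 1`. -/
def splice [DecidableEq α] (σ : Perm α) (x : α) : Perm (α ⊕ Fin 2) :=
  (swap (Sum.inr 0) (Sum.inl x)).permCongr (Perm.sumCongr σ (swap 0 1))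

variable [DecidableEq α]

theorem mk_splice_inr (σ τ : Perm α) (x : α) (b : Fin 2) :
    mk (splice σ x) (Perm.sumCongr τ (swap 0 1)) (Sum.inr b) =
      mk (splice σ x) (Perm.sumCongr τ (swap 0 1)) (Sum.inl x) := by
  have h₁ : mk (splice σ x) (Perm.sumCongr τ (swap 0 1)) (Sum.inr 1) = mk _ _ (Sum.inl x) := by
    rw [← mk_apply_left _ _ (Sum.inr 1)]
    simp [splice, swap_apply_of_ne_of_ne]
  have h₀ : mk (splice σ x) (Perm.sumCongr τ (swap 0 1)) (Sum.inr 0) = mk _ _ (Sum.inr 1) :=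
    mk_apply_right _ _ (Sum.inr 1)
  fin_cases b
  · exact h₀.trans h₁
  · exact h₁

theorem apply_splice_iff {f : α ⊕ Fin 2 → β} {x : α} (hx : f (Sum.inr 0) = f (Sum.inl x))
    (σ : Perm α) :
    (∀ y, f (splice σ x y) = f y) ↔ ∀ y, f (Perm.sumCongr σ (swap 0 1) y) = f y :=
  apply_permCongr_swap_iff hx _

theorem mk_splice_inl_apply (σ τ : Perm α) (x y : α) :
    mk (splice σ x) (Perm.sumCongr τ (swap 0 1)) (Sum.inl (σ y)) =
      mk (splice σ x) (Perm.sumCongr τ (swap 0 1)) (Sum.inl y) :=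
  (apply_splice_iff (mk_splice_inr σ τ x 0) σ).mp (mk_apply_left _ _) (Sum.inl y)

/-- Splicing two points that are paired by the second permutation into a joint orbit of `σ` and `τ`
does not change the set of joint orbits. -/
def spliceEquiv (σ τ : Perm α) (x : α) :
    JointOrbit (splice σ x) (Perm.sumCongr τ (swap 0 1)) ≃ JointOrbit σ τ where
  toFun := lift (Sum.elim (mk σ τ) fun _ => mk σ τ x)
    ((apply_splice_iff rfl σ).mpr (by rintro (y | b) <;> simp [mk_apply_left]))
    (by rintro (y | b) <;> simp [mk_apply_right])
  invFun := lift (fun y => mk _ _ (Sum.inl y)) (mk_splice_inl_apply σ τ x)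
    (fun y => mk_apply_right _ _ (Sum.inl y))
  left_inv := ind (by
    rintro (y | b)
    · rfl
    · exact (mk_splice_inr σ τ x b).symm)
  right_inv := ind fun _ => rfl

end JointOrbit

end JointOrbit

/-- A perfect matching on `α`, encoded as in `Cyclation`, which is the case `α = Fin (2 * n)`. -/
abbrev PerfectMatching (α : Type*) : Type _ :=
  {μ : Perm α // (∀ x, μ x ≠ x) ∧ μ * μ = 1}

namespace PerfectMatching

variable {α β : Type*}

theorem apply_apply (μ : PerfectMatching α) (x : α) : μ.1 (μ.1 x) = x :=
  Perm.congr_fun μ.2.2 x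

/-- Transport of perfect matchings along a relabelling of the points. -/
def congr (e : α ≃ β) : PerfectMatching α ≃ PerfectMatching β :=
  e.permCongr.subtypeEquiv fun μ => and_congr
    (e.forall_congr fun x => by simp)
    (by rw [← map_eq_one_iff e.permCongrHom e.permCongrHom.injective, map_mul]; rfl)

/-- The disjoint union of two perfect matchings. -/
def sum (μ : PerfectMatching α) (ν : PerfectMatching β) : PerfectMatching (α ⊕ β) :=
  ⟨Perm.sumCongr μ.1 ν.1, by rintro (x | x) <;> simp [μ.2.1, ν.2.1], by
    rw [Perm.sumCongr_mul, μ.2.2, ν.2.2, Perm.sumCongr_one]⟩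

theorem sum_left_injective (ν : PerfectMatching β) :
    Function.Injective fun μ : PerfectMatching α => sum μ ν := fun μ μ' h =>
  Subtype.ext (congrArg Prod.fst
    (Perm.sumCongrHom_injective (a₁ := (μ.1, ν.1)) (a₂ := (μ'.1, ν.1)) (congrArg Subtype.val h)))

theorem exists_sum_eq [Finite α] [Finite β] (μ : PerfectMatching (α ⊕ β))
    (h : Set.MapsTo μ.1 (Set.range Sum.inl) (Set.range Sum.inl)) :
    ∃ ν ν', sum ν ν' = μ := by
  obtain ⟨⟨σ, τ⟩, hστ : Perm.sumCongr σ τ = μ.1⟩ :=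
    Perm.mem_sumCongrHom_range_of_perm_mapsTo_inl h
  have hne := μ.2.1
  have hsq := μ.2.2
  rw [← hστ] at hne
  rw [← hστ, Perm.sumCongr_mul] at hsq
  have hsq' : (σ * σ, τ * τ) = 1 :=
    Perm.sumCongrHom_injective (hsq.trans (map_one _).symm)
  exact ⟨⟨σ, fun x hx => hne (Sum.inl x) (congrArg Sum.inl hx), congrArg Prod.fst hsq'⟩,
    ⟨τ, fun x hx => hne (Sum.inr x) (congrArg Sum.inr hx), congrArg Prod.snd hsq'⟩,
    Subtype.ext hστ⟩

/-- The perfect matching on two points. -/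
def pair : PerfectMatching (Fin 2) :=
  ⟨swap 0 1, by decide, swap_mul_self 0 1⟩

theorem eq_pair (μ : PerfectMatching (Fin 2)) : μ = pair := by
  revert μ
  decide

/-- The possible partners of the point `Sum.inr 1` in a perfect matching on `α ⊕ Fin 2`. -/
def slot (o : Option α) : α ⊕ Fin 2 :=
  o.elim (Sum.inr 0) Sum.inl

theorem slot_injective : Function.Injective (slot (α := α)) := by
  rintro (_ | x) (_ | y) h <;> simp_all [slot]

theorem slot_ne (o : Option α) : slot o ≠ Sum.inr 1 := by
  cases o <;> simp [slot]

theorem exists_slot_eq {p : α ⊕ Fin 2} (hp : p ≠ Sum.inr 1) : ∃ o, slot o = p := by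
  rcases p with x | b
  · exact ⟨some x, rfl⟩
  · exact ⟨none, by fin_cases b <;> simp_all [slot]⟩

theorem exists_sum_pair_eq [Finite α] {μ : PerfectMatching (α ⊕ Fin 2)}
    (h : μ.1 (Sum.inr 1) = Sum.inr 0) : ∃ ν, sum ν pair = μ := by
  have h' : μ.1 (Sum.inr 0) = Sum.inr 1 := by rw [← h, apply_apply]
  have hmaps : Set.MapsTo μ.1 (Set.range Sum.inl) (Set.range Sum.inl) := by
    rintro _ ⟨x, rfl⟩
    rcases hx : μ.1 (Sum.inl x) with y | b
    · exact ⟨y, rfl⟩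
    · have := apply_apply μ (Sum.inl x)
      fin_cases b <;> simp_all
  obtain ⟨ν, ν', rfl⟩ := exists_sum_eq μ hmaps
  exact ⟨ν, by rw [eq_pair ν']⟩

variable [DecidableEq α]

theorem swap_slot_apply (o : Option α) :
    swap (Sum.inr 0) (slot o) (Sum.inr 1) = Sum.inr 1 :=
  swap_apply_of_ne_of_ne (by simp) (slot_ne o).symm

/-- The perfect matching on `α ⊕ Fin 2` obtained from one on `α` by inserting two points, the
second of which gets the partner `slot o`. If `o = some x`, the former partner of `x` is then
matched with the first new point. -/
def insert (ν : PerfectMatching α) (o : Option α) : PerfectMatching (α ⊕ Fin 2) :=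
  congr (swap (Sum.inr 0) (slot o)) (sum ν pair)

theorem insert_apply (ν : PerfectMatching α) (o : Option α) :
    (insert ν o).1 (Sum.inr 1) = slot o := by
  simp [insert, congr, sum, pair, swap_slot_apply]

theorem insert_bijective [Finite α] :
    Function.Bijective fun p : PerfectMatching α × Option α => insert p.1 p.2 := by
  constructor
  · rintro ⟨ν, o⟩ ⟨ν', o'⟩ (h : insert ν o = insert ν' o')
    obtain rfl : o = o' := slot_injective (by rw [← insert_apply ν o, h, insert_apply])
    rw [sum_left_injective pair ((congr _).injective h)]
  · intro μ
    obtain ⟨o, ho⟩ := exists_slot_eq (μ.2.1 (Sum.inr 1))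
    obtain ⟨ν, hν⟩ : ∃ ν, sum ν pair = congr (swap (Sum.inr 0) (slot o)) μ := by
      apply exists_sum_pair_eq
      simp [congr, swap_slot_apply, ← ho]
    refine ⟨(ν, o), ?_⟩
    simp only [insert, hν]
    exact (congr (swap _ _)).symm_apply_apply μ

theorem card_jointOrbit_insert_none [Finite α] (ν : PerfectMatching α) (τ : Perm α) :
    Nat.card (JointOrbit (insert ν none).1 (Perm.sumCongr τ (swap 0 1))) =
      Nat.card (JointOrbit ν.1 τ) + 1 := by
  have h : (insert ν none).1 = Perm.sumCongr ν.1 (swap 0 1) := by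
    ext x; simp [insert, slot, congr, sum, pair]
  rw [h, Nat.card_congr (JointOrbit.sumCongr _ _ _ _), Nat.card_sum, JointOrbit.card_swap_swap]

theorem card_jointOrbit_insert_some (ν : PerfectMatching α) (τ : Perm α) (x : α) :
    Nat.card (JointOrbit (insert ν (some x)).1 (Perm.sumCongr τ (swap 0 1))) =
      Nat.card (JointOrbit ν.1 τ) :=
  Nat.card_congr (JointOrbit.spliceEquiv ν.1 τ x)

end PerfectMatching

theorem coe_intervalPerm_apply {n : ℕ} (x : Fin (2 * n)) :
    (intervalPerm n x : ℕ) = if (x : ℕ) % 2 = 0 then (x : ℕ) + 1 else (x : ℕ) - 1 :=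
  rfl

theorem intervalPerm_ne {n : ℕ} (x : Fin (2 * n)) : intervalPerm n x ≠ x := by
  rw [Ne, Fin.ext_iff, coe_intervalPerm_apply]
  split_ifs <;> omega

/-- The endpoints of `n + 1` intervals, split into those of the first `n` and those of the last. The
type ascription identifies `2 * n + 2` with `2 * (n + 1)`, which holds by definition. -/
def endpointSuccEquiv (n : ℕ) : Fin (2 * n) ⊕ Fin 2 ≃ Fin (2 * (n + 1)) :=
  finSumFinEquiv (m := 2 * n) (n := 2)

theorem coe_endpointSuccEquiv_inr (n : ℕ) (b : Fin 2) :
    (endpointSuccEquiv n (Sum.inr b) : ℕ) = 2 * n + b :=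
  rfl

theorem intervalPerm_succ_s10 (n : ℕ) :
    intervalPerm (n + 1) =
      (endpointSuccEquiv n).permCongr (Perm.sumCongr (intervalPerm n) (swap 0 1)) := by
  refine Equiv.ext ((endpointSuccEquiv n).forall_congr_right.mp fun x => Fin.ext ?_)
  rw [permCongr_apply, symm_apply_apply]
  rcases x with x | b
  · rfl
  · fin_cases b <;> simp [coe_intervalPerm_apply, coe_endpointSuccEquiv_inr]

namespace Cyclation

instance (n : ℕ) : Nonempty (Cyclation n) :=
  ⟨intervalPerm n, intervalPerm_ne, Equiv.ext (Function.Involutive.toPerm_involutive _)⟩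

theorem cycNumCycles_zero (c : Cyclation 0) : cycNumCycles c = 0 := by
  have : IsEmpty (JointOrbit c.1 (intervalPerm 0)) := ⟨JointOrbit.ind fun x => x.elim0⟩
  exact Nat.card_of_isEmpty (α := JointOrbit c.1 (intervalPerm 0))

/-- Insertion of the last interval. -/
noncomputable def insertEquiv (n : ℕ) : Cyclation n × Option (Fin (2 * n)) ≃ Cyclation (n + 1) :=
  (Equiv.ofBijective _ PerfectMatching.insert_bijective).trans
    (PerfectMatching.congr (endpointSuccEquiv n))

theorem cycNumCycles_insertEquiv {n : ℕ} (p : Cyclation n × Option (Fin (2 * n))) :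
    cycNumCycles (insertEquiv n p) =
      Nat.card (JointOrbit (PerfectMatching.insert p.1 p.2).1
        (Perm.sumCongr (intervalPerm n) (swap 0 1))) := by
  rw [Nat.card_congr (JointOrbit.permCongr (endpointSuccEquiv n) _ _), ← intervalPerm_succ_s10]
  rfl

theorem cycNumCycles_insertEquiv_none {n : ℕ} (c : Cyclation n) :
    cycNumCycles (insertEquiv n (c, none)) = cycNumCycles c + 1 :=
  (cycNumCycles_insertEquiv _).trans (PerfectMatching.card_jointOrbit_insert_none c _)

theorem cycNumCycles_insertEquiv_some {n : ℕ} (c : Cyclation n) (x : Fin (2 * n)) :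
    cycNumCycles (insertEquiv n (c, some x)) = cycNumCycles c :=
  (cycNumCycles_insertEquiv _).trans (PerfectMatching.card_jointOrbit_insert_some c _ x)

theorem sum_cycNumCycles_succ {M : Type*} [AddCommMonoid M] (f : ℕ → M) (n : ℕ) :
    ∑ c : Cyclation (n + 1), f (cycNumCycles c) =
      ∑ c : Cyclation n, (f (cycNumCycles c + 1) + (2 * n) • f (cycNumCycles c)) := by
  rw [← (insertEquiv n).sum_comp, Fintype.sum_prod_type]
  simp [Fintype.sum_option, cycNumCycles_insertEquiv_none, cycNumCycles_insertEquiv_some]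

theorem card_succ (n : ℕ) :
    Fintype.card (Cyclation (n + 1)) = (2 * n + 1) * Fintype.card (Cyclation n) := by
  simpa [add_comm, mul_comm] using sum_cycNumCycles_succ (M := ℕ) (fun _ => 1) n

end Cyclation

theorem avgNumCycles_zero : avgNumCycles 0 = 0 := by
  simp [avgNumCycles, Cyclation.cycNumCycles_zero]

theorem avgNumCycles_succ (n : ℕ) :
    avgNumCycles (n + 1) = avgNumCycles n + 1 / (2 * n + 1) := by
  have hcard : (Fintype.card (Cyclation n) : ℝ) ≠ 0 := by simp
  have hsum : ∑ c : Cyclation (n + 1), (cycNumCycles c : ℝ) =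
      (2 * n + 1) * ∑ c : Cyclation n, (cycNumCycles c : ℝ) + Fintype.card (Cyclation n) := by
    rw [Cyclation.sum_cycNumCycles_succ (fun k => (k : ℝ)), Finset.mul_sum,
      Fintype.card_eq_sum_ones, Nat.cast_sum, ← Finset.sum_add_distrib]
    refine Finset.sum_congr rfl fun c _ => ?_
    push_cast [nsmul_eq_mul]
    ring
  rw [avgNumCycles, avgNumCycles, hsum, Cyclation.card_succ]
  push_cast
  field_simp

theorem avgNumCycles_eq_harmonic (n : ℕ) :
    avgNumCycles n = (harmonic (2 * n) : ℝ) - (harmonic n : ℝ) / 2 := by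
  induction n with
  | zero => simp [avgNumCycles_zero]
  | succ n ih =>
    rw [avgNumCycles_succ, ih, Nat.mul_succ, harmonic_succ, harmonic_succ, harmonic_succ]
    push_cast
    field_simp
    ring

theorem abs_harmonic_sub_log_sub_eulerMascheroniConstant_le {n : ℕ} (hn : n ≠ 0) :
    |(harmonic n : ℝ) - Real.log n - Real.eulerMascheroniConstant| ≤ 1 / n := by
  have hn' : (0 : ℝ) < n := by positivity
  have hlower := Real.eulerMascheroniSeq_lt_eulerMascheroniConstant n
  have hupper := Real.eulerMascheroniConstant_lt_eulerMascheroniSeq' n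
  rw [Real.eulerMascheroniSeq] at hlower
  rw [Real.eulerMascheroniSeq', if_neg hn] at hupper
  have hlog : Real.log (n + 1) - Real.log n ≤ 1 / n := by
    rw [← Real.log_div (by positivity) hn'.ne']
    calc Real.log ((n + 1) / n) ≤ (n + 1) / n - 1 := Real.log_le_sub_one_of_pos (by positivity)
      _ = 1 / n := by field_simp; ring
  rw [abs_le]
  constructor <;> linarith [show (0 : ℝ) < 1 / n by positivity]

/-- The expected number of cycles of a random `n`-cyclation equals
`(1/2) log n + log 2 + γ/2 + O(1/n)` as `n → ∞`, where `γ` is Euler's constant. -/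
theorem avgNumCycles_asymptotic :
    ∃ C : ℝ, ∃ N : ℕ, ∀ n : ℕ, N ≤ n →
      |avgNumCycles n
          - ((1 / 2) * Real.log n + Real.log 2 + Real.eulerMascheroniConstant / 2)|
        ≤ C / n := by
  refine ⟨1, 1, fun n hn => ?_⟩
  have hn₀ : n ≠ 0 := by omega
  have h₁ := abs_harmonic_sub_log_sub_eulerMascheroniConstant_le hn₀
  have h₂ := abs_harmonic_sub_log_sub_eulerMascheroniConstant_le (mul_ne_zero two_ne_zero hn₀)
  have hlog : Real.log (2 * n : ℕ) = Real.log 2 + Real.log n := by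
    rw [Nat.cast_mul, Nat.cast_ofNat, Real.log_mul two_ne_zero (by positivity)]
  rw [hlog] at h₂
  calc |avgNumCycles n
          - ((1 / 2) * Real.log n + Real.log 2 + Real.eulerMascheroniConstant / 2)|
      = |(harmonic (2 * n) - (Real.log 2 + Real.log n) - Real.eulerMascheroniConstant)
          - (harmonic n - Real.log n - Real.eulerMascheroniConstant) / 2| := by
        rw [avgNumCycles_eq_harmonic]; ring_nf
    _ ≤ 1 / (2 * n : ℕ) + 1 / n / 2 := by
        refine (abs_sub _ _).trans (add_le_add h₂ ?_)
        rw [abs_div, abs_two]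
        gcongr
    _ = 1 / n := by push_cast; field_simp; norm_num
end
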